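/- The function f(x) = e^{−|x|} has linearly independent time-frequency translates, i.e., the Gabor system 𝒢(f, ℝ²) is linearly independent. -/

import Mathlib

/-!
Everything is read off near one translation parameter `β`. Suppose a finite combination of
time-frequency translates of `e^{-|x|}` vanishes almost everywhere; by continuity it vanishes
everywhere. On a small interval to the right of `β` each factor `e^{-|x-b|}` is either `e^{b-x}` or
`e^{x-b}`, so the combination agrees there with a function analytic on `ℝ`, which must then vanish
identically (`analytic_continuation`). The same holds to the left of `β`. The two analytic
functions differ only in the terms with `b = β`, and subtracting them gives
`P(x) (e^{β-x} - e^{x-β}) = 0` for all `x`, where `P` is the trigonometric polynomial collecting the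
coefficients of the translates by `β`. Hence `P = 0` off `β`, so everywhere, and its coefficients
vanish because distinct characters of `ℝ` are linearly independent (`trig_coeff_eq_zero`).
-/

open MeasureTheory

/-- The Gabor system `𝒢(f, Λ)` is linearly independent. -/
def GaborIndependent (f : ℝ → ℂ) (Λ : Set (ℝ × ℝ)) : Prop :=
  ∀ s : Finset (ℝ × ℝ), (s : Set (ℝ × ℝ)) ⊆ Λ →
    ∀ c : ℝ × ℝ → ℂ,
      (∀ᵐ x : ℝ ∂volume,
        ∑ p ∈ s, c p * Complex.exp (2 * ↑Real.pi * Complex.I * ↑p.1 * ↑x) * f (x - p.2) = 0) →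
      ∀ p ∈ s, c p = 0

/-- The character `x ↦ e^{2πiax}` of `ℝ`, the additive group being written multiplicatively in
order to use Dedekind's theorem on independence of characters. -/
noncomputable def gaborChar (a : ℝ) : Multiplicative ℝ →* ℂ where
  toFun x := Complex.exp (2 * ↑Real.pi * Complex.I * ↑a * ↑(Multiplicative.toAdd x))
  map_one' := by simp
  map_mul' x y := by
    rw [← Complex.exp_add, toAdd_mul]
    push_cast
    ring_nf

theorem gaborChar_injective : Function.Injective gaborChar := by
  intro a b h
  by_contra hab
  have hne : (a : ℂ) - b ≠ 0 := by
    exact_mod_cast sub_ne_zero.mpr hab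
  -- At `x = 1 / (2 (a - b))` the two characters differ by the factor `e^{πi} = -1`.
  have h1 := DFunLike.congr_fun h (Multiplicative.ofAdd (1 / (2 * (a - b))))
  simp only [gaborChar, MonoidHom.coe_mk, OneHom.coe_mk, toAdd_ofAdd] at h1
  have h2 : 2 * (Real.pi : ℂ) * Complex.I * a * ((1 / (2 * (a - b)) : ℝ) : ℂ)
      = 2 * (Real.pi : ℂ) * Complex.I * b * ((1 / (2 * (a - b)) : ℝ) : ℂ)
        + Real.pi * Complex.I := by
    push_cast
    field_simp
    ring
  rw [h2, Complex.exp_add, Complex.exp_pi_mul_I, mul_neg_one, neg_eq_self] at h1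
  exact Complex.exp_ne_zero _ h1

theorem trig_coeff_eq_zero (t : Finset ℝ) (d : ℝ → ℂ)
    (h : ∀ x : ℝ, ∑ a ∈ t, d a * Complex.exp (2 * ↑Real.pi * Complex.I * ↑a * ↑x) = 0) :
    ∀ a ∈ t, d a = 0 := by
  have hli := (linearIndependent_monoidHom (Multiplicative ℝ) ℂ).comp gaborChar gaborChar_injective
  refine linearIndependent_iff'.mp hli t d ?_
  funext x
  simpa [gaborChar, Finset.sum_apply] using h (Multiplicative.toAdd x)

/-- If along a filter accumulating at `β` every `-|x - b|` is the affine function `σ (b - x)`, then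
the relation continues from there to all of `ℝ` with `e^{-|x - b|}` replaced by `e^{σ (b - x)}`. -/
theorem analytic_continuation (s : Finset (ℝ × ℝ)) (c : ℝ × ℝ → ℂ) (β : ℝ)
    (h : ∀ x : ℝ, ∑ p ∈ s, c p * Complex.exp (2 * ↑Real.pi * Complex.I * ↑p.1 * ↑x) *
      (Real.exp (-|x - p.2|) : ℂ) = 0)
    (l : Filter ℝ) [l.NeBot] (hl : l ≤ nhdsWithin β {β}ᶜ) (σ : ℝ × ℝ → ℝ)
    (hσ : ∀ p ∈ s, ∀ᶠ x in l, -|x - p.2| = σ p * (p.2 - x)) (x : ℝ) :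
    ∑ p ∈ s, c p * Complex.exp (2 * ↑Real.pi * Complex.I * ↑p.1 * ↑x) *
      (Real.exp (σ p * (p.2 - x)) : ℂ) = 0 := by
  have hof : AnalyticOnNhd ℝ (fun x : ℝ => (x : ℂ)) Set.univ :=
    fun y _ => Complex.ofRealCLM.analyticAt y
  have han : AnalyticOnNhd ℝ (fun x : ℝ => ∑ p ∈ s,
      c p * Complex.exp (2 * ↑Real.pi * Complex.I * ↑p.1 * ↑x) *
      (Real.exp (σ p * (p.2 - x)) : ℂ)) Set.univ := by
    intro y _
    have hy := hof y trivial
    simp only [Complex.ofReal_exp, Complex.ofReal_mul, Complex.ofReal_sub]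
    refine Finset.analyticAt_fun_sum _ fun p _ => ?_
    have hexp : ∀ z, AnalyticAt ℝ Complex.exp z := fun z =>
      (analyticAt_cexp (z := z)).restrictScalars
    exact (analyticAt_const.mul ((hexp _).fun_comp (analyticAt_const.mul hy))).mul
      ((hexp _).fun_comp (analyticAt_const.mul (analyticAt_const.sub hy)))
  refine han.eqOn_zero_of_preconnected_of_frequently_eq_zero isPreconnected_univ
    (Set.mem_univ β) ?_ (Set.mem_univ x)
  refine Filter.Frequently.filter_mono (Filter.Eventually.frequently ?_) hl
  filter_upwards [(Filter.eventually_all_finset s).mpr hσ] with y hy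
  rw [← h y]
  exact Finset.sum_congr rfl fun p hp => by rw [hy p hp]

/-- The function `f(x) = e^{-|x|}` has linearly independent time-frequency translates. -/
theorem exp_neg_abs_independent :
    GaborIndependent (fun x : ℝ => (Real.exp (-|x|) : ℂ)) Set.univ := by
  rintro s - c hae ⟨α, β⟩ hp
  have h : ∀ x : ℝ, ∑ p ∈ s, c p * Complex.exp (2 * ↑Real.pi * Complex.I * ↑p.1 * ↑x) *
      (Real.exp (-|x - p.2|) : ℂ) = 0 := by
    refine congrFun ((Continuous.ae_eq_iff_eq volume ?_ continuous_const).mp hae)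
    fun_prop
  have hR := analytic_continuation s c β h (nhdsWithin β (Set.Ioi β))
    (nhdsWithin_mono β fun x hx => ne_of_gt hx) (fun p => if p.2 ≤ β then 1 else -1) (by
      intro p _
      by_cases hb : p.2 ≤ β
      · filter_upwards [self_mem_nhdsWithin] with x hx
        have hx : β < x := hx
        rw [if_pos hb, abs_of_nonneg (by linarith)]
        ring
      · filter_upwards [mem_nhdsWithin_of_mem_nhds (Iio_mem_nhds (not_le.mp hb))] with x hx
        have hx : x < p.2 := hx
        rw [if_neg hb, abs_of_nonpos (by linarith)]
        ring)
  have hL := analytic_continuation s c β h (nhdsWithin β (Set.Iio β))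
    (nhdsWithin_mono β fun x hx => ne_of_lt hx) (fun p => if p.2 < β then 1 else -1) (by
      intro p _
      by_cases hb : p.2 < β
      · filter_upwards [mem_nhdsWithin_of_mem_nhds (Ioi_mem_nhds hb)] with x hx
        have hx : p.2 < x := hx
        rw [if_pos hb, abs_of_nonneg (by linarith)]
        ring
      · filter_upwards [self_mem_nhdsWithin] with x hx
        have hx : x < β := hx
        rw [if_neg hb, abs_of_nonpos (by linarith)]
        ring)
  have hmul : ∀ x : ℝ, (∑ p ∈ s with p.2 = β,
      c p * Complex.exp (2 * ↑Real.pi * Complex.I * ↑p.1 * ↑x)) *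
      ((Real.exp (β - x) - Real.exp (x - β) : ℝ) : ℂ) = 0 := by
    intro x
    rw [← sub_self (0 : ℂ)]
    nth_rewrite 1 [← hR x]
    rw [← hL x, ← Finset.sum_sub_distrib, Finset.sum_mul, Finset.sum_filter]
    refine Finset.sum_congr rfl fun p _ => ?_
    rcases lt_trichotomy p.2 β with hb | hb | hb
    · simp [hb, hb.le, hb.ne]
    · simp [hb, mul_sub, neg_add_eq_sub]
    · simp [hb.not_gt, hb.not_ge, hb.ne']
  have hP : (fun x : ℝ => ∑ p ∈ s with p.2 = β,
      c p * Complex.exp (2 * ↑Real.pi * Complex.I * ↑p.1 * ↑x)) = fun _ => 0 := by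
    refine Continuous.ext_on (dense_compl_singleton β) (by fun_prop) continuous_const ?_
    intro x hx
    refine (mul_eq_zero.mp (hmul x)).resolve_right fun h0 => hx ?_
    have h1 := Real.exp_injective (sub_eq_zero.mp (Complex.ofReal_eq_zero.mp h0))
    simp only [Set.mem_singleton_iff]
    linarith
  refine trig_coeff_eq_zero ((s.filter fun p => p.2 = β).image Prod.fst) (fun a => c (a, β)) ?_ α
    (Finset.mem_image.mpr ⟨(α, β), by simp [hp], rfl⟩)
  intro x
  rw [Finset.sum_image]
  · rw [← congrFun hP x]
    refine Finset.sum_congr rfl fun p hp' => ?_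
    rw [← (Finset.mem_filter.mp hp').2]
  · intro p hp' q hq' hpq
    exact Prod.ext hpq ((Finset.mem_filter.mp hp').2.trans (Finset.mem_filter.mp hq').2.symm)
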